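/- Let F = F(a₁, …, aₙ) be a free group with ordered basis A = (a₁, …, aₙ). If a subgroup H ≤ F is in echelon form with respect to A, then Dep(H), the subgroup generated by all elements of F that depend on H, is also in echelon form with respect to A. -/

import Mathlib

open scoped Monoid.Coprod

variable {F : Type*}

/-- The canonical homomorphism `φ_g : H ∗ ⟨x⟩ → F` from the free product of `H` with an
infinite cyclic group (the free group on one generator `x`), restricting to the inclusion
`H ↪ F` and sending `x` to `g`. -/
noncomputable def phi [Group F] (H : Subgroup F) (g : F) :
    (↥H ∗ FreeGroup Unit) →* F :=
  Monoid.Coprod.lift H.subtype (FreeGroup.lift fun _ => g)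

/-- `g` depends on `H` (is algebraic over `H`) if `φ_g` is not injective. -/
def Depends [Group F] (H : Subgroup F) (g : F) : Prop :=
  ¬ Function.Injective (phi H g)

/-- `dep H`: the set of elements of `F` that depend on `H`. -/
def depSet [Group F] (H : Subgroup F) : Set F := {g | Depends H g}

/-- `Dep H`: the subgroup generated by the elements that depend on `H`. -/
noncomputable def DepSubgroup [Group F] (H : Subgroup F) : Subgroup F :=
  Subgroup.closure (depSet H)

/-- The rank of a subgroup: the minimal cardinality of a generating set. For subgroups of
free groups this equals the cardinality of a free basis. -/
noncomputable def rk [Group F] (H : Subgroup F) : Cardinal :=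
  ⨅ S : {S : Set F // Subgroup.closure S = H}, Cardinal.mk S.1


/-- `F_i = ⟨a₁, …, a_i⟩`, the subgroup of `FreeGroup (Fin n)` generated by the first `i`
generators. -/
def stageSubgroup (n : ℕ) (i : ℕ) : Subgroup (FreeGroup (Fin n)) :=
  Subgroup.closure (FreeGroup.of '' {j : Fin n | (j : ℕ) < i})

/-- `H` is in echelon form with respect to the ordered basis of `FreeGroup (Fin n)`:
for each `1 ≤ i ≤ n`, `rank (H ∩ F_i) ≤ rank (H ∩ F_{i-1}) + 1`. -/
def IsEchelon {n : ℕ} (H : Subgroup (FreeGroup (Fin n))) : Prop :=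
  ∀ i : ℕ, 1 ≤ i → i ≤ n →
    rk (H ⊓ stageSubgroup n i) ≤ rk (H ⊓ stageSubgroup n (i - 1)) + 1

/-!
Adjoining to `E` an element `g` that depends on `E` does not raise the rank: otherwise `φ_g` would
map `E ∗ ⟨x⟩`, which has `rk E + 1` generators, onto a free group of rank at least `rk E + 1`, and
would be injective because free groups of finite rank are Hopfian. Hence `rk (Dep H) ≤ rk H`.

For every subgroup `K`, the stage `K ∩ F_i` is a retract of `K ∩ F_{i+1}`, so the rank of the stages
is nondecreasing in `i`, and by the Hopf property two consecutive stages of equal rank coincide. If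
this happens for `K = Dep H`, it also happens for the smaller subgroup `H`; thus the rank of the
stages of `Dep H` jumps wherever that of `H` does, and the jumps of `H` are by one. Since the final
rank of `Dep H` is no larger than that of `H`, the ranks agree at every stage.

Both retractions and the injectivity of `H ∗ ⟨x⟩ → E ∗ ⟨x⟩` for `H ≤ E` are obtained from
homomorphisms to permutational wreath products, evaluated at a base coset.
-/

open Cardinal Subgroup

/-! ### Residual finiteness and the Hopf property -/

theorem exists_hom_perm_apply_eq {α : Type*} (S : Set (FreeGroup α)) [Finite S] :
    ∃ φ : FreeGroup α →* Equiv.Perm S,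
      ∀ (a : α) (x y : S), FreeGroup.of a * x = (y : FreeGroup α) → φ (FreeGroup.of a) x = y := by
  have partialTranslation (a : α) :
      ∃ σ : Equiv.Perm S, ∀ x : {x : S // FreeGroup.of a * x ∈ S}, σ x = ⟨_, x.2⟩ :=
    Equiv.Perm.exists_extending_pair _ _ Subtype.val_injective fun x y h =>
      Subtype.ext <| Subtype.ext <| mul_left_cancel <| congrArg Subtype.val h
  choose σ hσ using partialTranslation
  refine ⟨FreeGroup.lift σ, fun a x y h => ?_⟩
  rw [FreeGroup.lift_apply_of, hσ a ⟨x, h ▸ y.2⟩]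
  exact Subtype.ext h

-- A homomorphism acting on the suffixes of the reduced word of `g` by partial left translations
-- moves `1` to `g`, one letter at a time.
instance freeGroup_residuallyFinite {α : Type*} : Group.ResiduallyFinite (FreeGroup α) := by
  classical
  refine Group.residuallyFinite_of_forall_exists_finite_monoidHom fun g hg => ?_
  let S : Set (FreeGroup α) := {x | ∃ L, L <:+ g.toWord ∧ FreeGroup.mk L = x}
  have : Finite S := by
    refine ((List.finite_toSet g.toWord.tails).image FreeGroup.mk).subset ?_
    rintro _ ⟨L, hL, rfl⟩
    exact ⟨L, (List.mem_tails _ _).2 hL, rfl⟩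
  obtain ⟨φ, hφ⟩ := exists_hom_perm_apply_eq S
  let base : S := ⟨1, [], List.nil_suffix, rfl⟩
  have hφ_suffix (L) (hL : L <:+ g.toWord) (x : S) (hx : FreeGroup.mk L = x) :
      φ (FreeGroup.mk L) base = x := by
    induction L generalizing x with
    | nil =>
      rw [← FreeGroup.one_eq_mk, map_one, Equiv.Perm.one_apply]
      exact Subtype.ext hx
    | cons p L ih =>
      have hcons : FreeGroup.mk (p :: L) = FreeGroup.mk [p] * FreeGroup.mk L := by
        rw [FreeGroup.mul_mk, List.singleton_append]
      have hL' : L <:+ g.toWord := (List.suffix_cons p L).trans hL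
      rw [hcons, map_mul, Equiv.Perm.mul_apply, ih hL' ⟨FreeGroup.mk L, L, hL', rfl⟩ rfl]
      obtain ⟨a, _ | _⟩ := p
      · have hinv : FreeGroup.mk [(a, false)] = (FreeGroup.of a)⁻¹ := rfl
        rw [hinv, map_inv, Equiv.Perm.inv_eq_iff_eq]
        refine (hφ a _ _ ?_).symm
        rw [← hx, hcons, hinv, mul_inv_cancel_left]
      · exact hφ a _ _ (hcons.symm.trans hx)
  let word : S := ⟨g, g.toWord, List.suffix_rfl, FreeGroup.mk_toWord⟩
  refine ⟨Equiv.Perm S, inferInstance, inferInstance, φ, fun h => hg ?_⟩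
  have hbase : word = base := by
    rw [← hφ_suffix _ List.suffix_rfl word FreeGroup.mk_toWord, FreeGroup.mk_toWord, h,
      Equiv.Perm.one_apply]
  exact congrArg Subtype.val hbase

theorem finite_monoidHom (G P : Type*) [Group G] [Group.FG G] [Group P] [Finite P] :
    Finite (G →* P) := by
  obtain ⟨S, hS⟩ := Group.FG.out (G := G)
  exact Finite.of_injective (fun (f : G →* P) (s : S) => f s) fun f f' h =>
    MonoidHom.eq_of_eqOn_dense hS fun s hs => congrFun h ⟨s, hs⟩

-- Precomposition with `f` permutes the finitely many homomorphisms to a finite quotient `P`, so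
-- every `G →* P` factors through `f` and kills its kernel.
theorem injective_of_surjective_of_residuallyFinite {G : Type*} [Group G] [Group.FG G]
    [Group.ResiduallyFinite G] {f : G →* G} (hf : Function.Surjective f) :
    Function.Injective f := by
  refine (injective_iff_map_eq_one f).2 fun g hg =>
    Group.eq_one_iff_forall_finiteIndexNormalSubroup g fun N => ?_
  have := finite_monoidHom G (G ⧸ N.toSubgroup)
  have hcomp : Function.Injective fun ψ : G →* G ⧸ N.toSubgroup => ψ.comp f :=
    fun _ _ => (MonoidHom.cancel_right hf).1
  obtain ⟨ψ, hψ⟩ := Finite.surjective_of_injective hcomp (QuotientGroup.mk' N.toSubgroup)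
  refine (QuotientGroup.eq_one_iff g).1 ?_
  rw [← QuotientGroup.mk'_apply, ← hψ, MonoidHom.comp_apply, hg, map_one]

/-! ### Rank -/

section Rank

universe u v

variable {G G' : Type u} [Group G] [Group G']

theorem rk_closure_le (S : Set G) : rk (closure S) ≤ #S :=
  ciInf_le' (fun S' : {S' : Set G // closure S' = closure S} => #S'.1) ⟨S, rfl⟩

theorem exists_closure_eq_mk_eq_rk (K : Subgroup G) : ∃ S : Set G, closure S = K ∧ #S = rk K := by
  have : Nonempty {S : Set G // closure S = K} := ⟨⟨K, K.closure_eq⟩⟩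
  obtain ⟨S, hS⟩ := ciInf_mem fun S : {S : Set G // closure S = K} => #S.1
  exact ⟨S.1, S.2, hS⟩

theorem rk_map_le (f : G →* G') (K : Subgroup G) : rk (K.map f) ≤ rk K := by
  obtain ⟨S, rfl, hS⟩ := exists_closure_eq_mk_eq_rk K
  rw [MonoidHom.map_closure, ← hS]
  exact (rk_closure_le _).trans mk_image_le

theorem rk_map_of_injective {f : G →* G'} (hf : Function.Injective f) (K : Subgroup G) :
    rk (K.map f) = rk K := by
  refine (rk_map_le f K).antisymm ?_
  obtain ⟨S, hSK, hS⟩ := exists_closure_eq_mk_eq_rk (K.map f)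
  have hrange : S ⊆ Set.range f :=
    (subset_closure.trans hSK.le).trans (Set.image_subset_range f K)
  have hpreimage : closure (f ⁻¹' S) = K := by
    apply map_injective hf
    rw [MonoidHom.map_closure, Set.image_preimage_eq_of_subset hrange, hSK]
  rw [← hS, ← hpreimage]
  exact (rk_closure_le _).trans (mk_preimage_of_injective f S hf)

theorem rk_top_subtype (K : Subgroup G) : rk (⊤ : Subgroup K) = rk K := by
  rw [← rk_map_of_injective K.subtype_injective, ← MonoidHom.range_eq_map, range_subtype]

theorem rk_sup_le (H K : Subgroup G) : rk (H ⊔ K) ≤ rk H + rk K := by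
  obtain ⟨S, rfl, hS⟩ := exists_closure_eq_mk_eq_rk H
  obtain ⟨T, rfl, hT⟩ := exists_closure_eq_mk_eq_rk K
  rw [← Subgroup.closure_union, ← hS, ← hT]
  exact (rk_closure_le _).trans (mk_union_le S T)

-- In the abelianization `ι →₀ ℤ` the elements of `b '' s` become linearly independent vectors in
-- the span of the image of `S`.
theorem lift_mk_le_lift_mk_of_image_subset_closure {ι : Type v} (b : FreeGroupBasis ι G)
    {s : Set ι} {S : Set G} (h : b '' s ⊆ closure S) : lift.{u} #s ≤ lift.{v} #S := by
  let p : G →* Multiplicative (ι →₀ ℤ) :=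
    b.lift fun i => Multiplicative.ofAdd (Finsupp.single i 1)
  let V : Submodule ℤ (ι →₀ ℤ) := Submodule.span ℤ ((fun x => (p x).toAdd) '' S)
  have hclosure : closure S ≤ V.toAddSubgroup.toSubgroup.comap p :=
    (closure_le _).2 fun x hx => Submodule.subset_span ⟨x, hx, rfl⟩
  have hmem (i : s) : Finsupp.single (i : ι) (1 : ℤ) ∈ V := by
    have : (p (b i)).toAdd ∈ V := hclosure (h ⟨i, i.2, rfl⟩)
    simpa [p] using this
  have hindep : LinearIndependent ℤ fun i : s => (⟨Finsupp.single (i : ι) 1, hmem i⟩ : V) :=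
    .of_comp V.subtype <|
      (Finsupp.linearIndependent_single_one ℤ ι).comp _ Subtype.val_injective
  calc lift.{u} #s ≤ lift.{u} #((fun x => (p x).toAdd) '' S) :=
        lift_le.2 (hindep.cardinal_le_rank.trans (rank_span_le _))
    _ ≤ lift.{v} #S := mk_image_le_lift

theorem closure_range_freeGroupBasis {ι : Type v} (b : FreeGroupBasis ι G) :
    closure (Set.range b) = ⊤ := by
  have hb : ⇑b = b.repr.symm ∘ FreeGroup.of := rfl
  rw [hb, Set.range_comp, ← MulEquiv.coe_toMonoidHom, ← MonoidHom.map_closure,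
    FreeGroup.closure_range_of, map_top_of_surjective _ b.repr.symm.surjective]

theorem rk_top_eq_mk {ι : Type u} (b : FreeGroupBasis ι G) : rk (⊤ : Subgroup G) = #ι := by
  apply le_antisymm
  · rw [← closure_range_freeGroupBasis b]
    exact (rk_closure_le _).trans mk_range_le
  · obtain ⟨S, hS, hrk⟩ := exists_closure_eq_mk_eq_rk (⊤ : Subgroup G)
    rw [← hrk, ← mk_univ, ← lift_le]
    exact lift_mk_le_lift_mk_of_image_subset_closure b (s := Set.univ) (by simp [hS])

theorem injective_of_surjective_of_rk_le [IsFreeGroup G'] {f : G →* G'}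
    (hf : Function.Surjective f) (hfin : rk (⊤ : Subgroup G) < ℵ₀)
    (hle : rk (⊤ : Subgroup G) ≤ rk (⊤ : Subgroup G')) : Function.Injective f := by
  obtain ⟨S, hS, hrk⟩ := exists_closure_eq_mk_eq_rk (⊤ : Subgroup G)
  have hge : rk (⊤ : Subgroup G') ≤ rk (⊤ : Subgroup G) := by
    rw [← map_top_of_surjective f hf]
    exact rk_map_le f ⊤
  have : Finite S := lt_aleph0_iff_finite.1 (hrk.trans_lt hfin)
  obtain ⟨e⟩ : Nonempty (IsFreeGroup.Generators G' ≃ S) := by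
    rw [← Cardinal.eq, ← rk_top_eq_mk (IsFreeGroup.basis G'), hrk, hge.antisymm hle]
  let π : FreeGroup S →* G := FreeGroup.lift (↑)
  have hπ : Function.Surjective π := by
    rw [FreeGroup.lift_surjective_iff_closure_range_eq_top, Subtype.range_coe, hS]
  let θ : G' ≃* FreeGroup S := ((IsFreeGroup.basis G').reindex e).repr
  have hθ : Function.Injective ((θ.toMonoidHom.comp f).comp π) :=
    injective_of_surjective_of_residuallyFinite (θ.surjective.comp (hf.comp hπ))
  exact .of_comp (f := θ) (.of_comp_right hθ hπ)

end Rank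

/-! ### Permutational wreath products -/

section PermWreath

variable {A N X : Type*} [Group A] [Group N]

/-- The unrestricted permutational wreath product of `N` and the symmetric group of `X`, with
multiplication `(p, σ) * (q, τ) = (p * q ∘ σ⁻¹, σ * τ)`. Monomial actions of a group take values in
it, so it is the target of induced homomorphisms. -/
abbrev PermWreath (N X : Type*) [Group N] := (X → N) ⋊[mulAutArrow] Equiv.Perm X

theorem PermWreath.mul_left_apply_of_right_apply_eq {w : PermWreath N X} {b : X}
    (h : w.right b = b) (w' : PermWreath N X) : (w * w').left b = w.left b * w'.left b := by
  have : w.right⁻¹ b = b := Equiv.Perm.inv_eq_iff_eq.2 h.symm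
  exact congrArg (fun x => w.left b * w'.left x) this

variable [MulAction A X]

theorem exists_orbit_transversal (b : X) :
    ∃ u : X → A, u b = 1 ∧ ∀ x ∈ MulAction.orbit A b, u x • b = x := by
  classical
  have hexists (x : X) : ∃ a : A, x ∈ MulAction.orbit A b → a • b = x :=
    (em (x ∈ MulAction.orbit A b)).elim (fun ⟨a, ha⟩ => ⟨a, fun _ => ha⟩) fun h => ⟨1, h.elim⟩
  choose u hu using hexists
  refine ⟨Function.update u b 1, Function.update_self .., fun x hx => ?_⟩
  obtain rfl | hxb := eq_or_ne x b
  · rw [Function.update_self, one_smul]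
  · rw [Function.update_of_ne hxb, hu x hx]

-- The Kaloujnine–Krasner construction: `u x` carries `b` to `x`, and the `x`-coordinate of the
-- image of `a` is the value of `f` at the loop `(u x)⁻¹ * a * u (a⁻¹ • x)`.
theorem exists_hom_permWreath_extending (b : X) (f : MulAction.stabilizer A b →* N) :
    ∃ Φ : A →* PermWreath N X, (∀ a x, (Φ a).right x = a • x) ∧
      ∀ a : MulAction.stabilizer A b, (Φ a).left b = f a := by
  classical
  obtain ⟨u, hub, hu⟩ := exists_orbit_transversal (A := A) b
  have orbit_inv_smul {x : X} (a : A) (hx : x ∈ MulAction.orbit A b) :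
      a⁻¹ • x ∈ MulAction.orbit A b :=
    MulAction.mem_orbit_of_mem_orbit _ hx
  have loop_mem {x : X} (hx : x ∈ MulAction.orbit A b) (a : A) :
      (u x)⁻¹ * a * u (a⁻¹ • x) ∈ MulAction.stabilizer A b := by
    rw [MulAction.mem_stabilizer_iff, mul_smul, mul_smul, hu _ (orbit_inv_smul a hx),
      smul_inv_smul, inv_smul_eq_iff, hu x hx]
  let p (a : A) (x : X) : N :=
    if hx : x ∈ MulAction.orbit A b then f ⟨_, loop_mem hx a⟩ else 1
  have p_mul (a a' : A) (x : X) : p (a * a') x = p a x * p a' (a⁻¹ • x) := by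
    by_cases hx : x ∈ MulAction.orbit A b
    · simp only [p, dif_pos hx, dif_pos (orbit_inv_smul a hx), ← map_mul]
      congr 1
      ext
      simp only [Subgroup.coe_mul, mul_inv_rev, mul_smul]
      group
    · have hx' : a⁻¹ • x ∉ MulAction.orbit A b := fun h => hx <| by
        simpa using orbit_inv_smul a⁻¹ h
      simp only [p, dif_neg hx, dif_neg hx', mul_one]
  refine ⟨MonoidHom.mk' (fun a => ⟨p a, MulAction.toPerm a⟩) fun a a' => ?_,
    fun a x => rfl, fun a => ?_⟩
  · refine SemidirectProduct.ext (funext (p_mul a a')) (map_mul (MulAction.toPermHom A X) a a')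
  · have hab : (a : A)⁻¹ • b = b := (inv_mem a.2 : (a : A)⁻¹ ∈ MulAction.stabilizer A b)
    change p a b = f a
    simp only [p, dif_pos (MulAction.mem_orbit_self b), hab, hub, inv_one, one_mul, mul_one]

theorem coprod_map_id_injective {H E Z : Type*} [Group H] [Group E] [Group Z] {f : H →* E}
    (hf : Function.Injective f) : Function.Injective (Monoid.Coprod.map f (MonoidHom.id Z)) := by
  let b : E ⧸ f.range := (1 : E)
  have hstab : MulAction.stabilizer E b = f.range := MulAction.stabilizer_quotient _
  let e : MulAction.stabilizer E b ≃* H :=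
    (MulEquiv.subgroupCongr hstab).trans (MonoidHom.ofInjective hf).symm
  obtain ⟨Φ, hΦ_right, hΦ_left⟩ :=
    exists_hom_permWreath_extending b ((Monoid.Coprod.inl (N := Z)).comp e.toMonoidHom)
  let Ψ : E ∗ Z →* PermWreath (H ∗ Z) (E ⧸ f.range) :=
    Monoid.Coprod.lift Φ <| SemidirectProduct.inl.comp <|
      (Pi.constMonoidHom (E ⧸ f.range) (H ∗ Z)).comp Monoid.Coprod.inr
  have hΨ (v : H ∗ Z) : (Ψ (Monoid.Coprod.map f (MonoidHom.id Z) v)).right b = b ∧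
      (Ψ (Monoid.Coprod.map f (MonoidHom.id Z) v)).left b = v := by
    induction v using Monoid.Coprod.induction_on with
    | inl h =>
      have hfh : f h ∈ MulAction.stabilizer E b := hstab.ge ⟨h, rfl⟩
      have he : e ⟨f h, hfh⟩ = h := (MonoidHom.ofInjective hf).symm_apply_apply h
      simp only [Monoid.Coprod.map_apply_inl, Ψ, Monoid.Coprod.lift_apply_inl]
      exact ⟨(hΦ_right _ _).trans hfh, (hΦ_left ⟨_, hfh⟩).trans (congrArg Monoid.Coprod.inl he)⟩
    | inr z => simp [Ψ]
    | mul v w hv hw =>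
      rw [map_mul, map_mul, PermWreath.mul_left_apply_of_right_apply_eq hv.1, hv.2, hw.2]
      exact ⟨(congrArg _ hw.1).trans hv.1, rfl⟩
  exact Function.LeftInverse.injective (g := fun y => (Ψ y).left b) fun v => (hΨ v).2

theorem exists_hom_permWreath_extending_closure {α : Type*} [MulAction (FreeGroup α) X] {s : Set α}
    (Φ : closure (FreeGroup.of '' s) →* PermWreath N X)
    (hΦ : ∀ g x, (Φ g).right x = (g : FreeGroup α) • x) :
    ∃ Ψ : FreeGroup α →* PermWreath N X, (∀ g x, (Ψ g).right x = g • x) ∧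
      ∀ g : closure (FreeGroup.of '' s), Ψ g = Φ g := by
  classical
  let Ψ : FreeGroup α →* PermWreath N X := FreeGroup.lift fun a =>
    if ha : a ∈ s then Φ ⟨FreeGroup.of a, subset_closure ⟨a, ha, rfl⟩⟩
    else SemidirectProduct.inr (MulAction.toPerm (FreeGroup.of a))
  have hright : SemidirectProduct.rightHom.comp Ψ = MulAction.toPermHom (FreeGroup α) X := by
    ext a x
    change (Ψ (FreeGroup.of a)).right x = FreeGroup.of a • x
    by_cases ha : a ∈ s
    · simp only [Ψ, FreeGroup.lift_apply_of, dif_pos ha, hΦ]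
    · simp only [Ψ, FreeGroup.lift_apply_of, dif_neg ha, SemidirectProduct.right_inr,
        MulAction.toPerm_apply]
  have hrestrict : Ψ.comp (closure (FreeGroup.of '' s)).subtype = Φ := by
    refine MonoidHom.eq_of_eqOn_dense (closure_closure_coe_preimage (k := FreeGroup.of '' s)) ?_
    rintro ⟨_, _⟩ ⟨a, ha, rfl⟩
    simp [Ψ, ha]
  exact ⟨Ψ, fun g x => congrArg (fun f => f g x) hright, fun g => congrArg (fun f => f g) hrestrict⟩

end PermWreath

/-! ### Retracts of subgroups -/

/-- `IsRetractOf L K` says that the subgroup `L` is a retract of the subgroup `K`: some homomorphism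
from `K` to `L` restricts to the identity of `L`. -/
def IsRetractOf {G : Type*} [Group G] (L K : Subgroup G) : Prop :=
  ∃ (h : L ≤ K) (ρ : K →* L), ρ.comp (inclusion h) = MonoidHom.id L

theorem isRetractOf_inf_closure_of_image {α : Type*} (s : Set α) (K : Subgroup (FreeGroup α)) :
    IsRetractOf (K ⊓ closure (FreeGroup.of '' s)) K := by
  let L := closure (FreeGroup.of '' s)
  let b : FreeGroup α ⧸ K := (1 : FreeGroup α)
  have mem_stabilizer_iff (g : FreeGroup α) : g • b = b ↔ g ∈ K := by
    rw [← MulAction.mem_stabilizer_iff, MulAction.stabilizer_quotient]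
  let incl : MulAction.stabilizer L b →* (K ⊓ L : Subgroup (FreeGroup α)) :=
    (L.subtype.comp (MulAction.stabilizer L b).subtype).codRestrict _
      fun a => ⟨(mem_stabilizer_iff _).1 a.2, a.1.2⟩
  obtain ⟨Φ, hΦ_right, hΦ_left⟩ := exists_hom_permWreath_extending b incl
  obtain ⟨Ψ, hΨ_right, hΨ_restrict⟩ := exists_hom_permWreath_extending_closure Φ hΦ_right
  have hΨ_fix (k : K) : (Ψ k).right b = b :=
    (hΨ_right _ _).trans ((mem_stabilizer_iff _).2 k.2)
  let ρ : K →* (K ⊓ L : Subgroup (FreeGroup α)) := MonoidHom.mk' (fun k => (Ψ k).left b)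
    fun k k' => by
      rw [Subgroup.coe_mul, map_mul, PermWreath.mul_left_apply_of_right_apply_eq (hΨ_fix k)]
  refine ⟨inf_le_left, ρ, MonoidHom.ext fun k => ?_⟩
  have hk : Ψ k = Φ ⟨k, k.2.2⟩ := hΨ_restrict ⟨k, k.2.2⟩
  change (Ψ k).left b = k
  rw [hk, hΦ_left ⟨⟨k, k.2.2⟩, (mem_stabilizer_iff _).2 k.2.1⟩]
  rfl

section Retract

variable {G : Type*} [Group G] {L K : Subgroup G}

theorem IsRetractOf.rk_le (h : IsRetractOf L K) : rk L ≤ rk K := by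
  obtain ⟨hLK, ρ, hρ⟩ := h
  have hsurj : Function.Surjective ρ := fun l => ⟨inclusion hLK l, DFunLike.congr_fun hρ l⟩
  rw [← rk_top_subtype L, ← rk_top_subtype K, ← map_top_of_surjective ρ hsurj]
  exact rk_map_le ρ ⊤

theorem IsRetractOf.eq_of_rk_le [IsFreeGroup L] (h : IsRetractOf L K) (hfin : rk K < ℵ₀)
    (hle : rk K ≤ rk L) : L = K := by
  obtain ⟨hLK, ρ, hρ⟩ := h
  have hfix (l : L) : ρ (inclusion hLK l) = l := DFunLike.congr_fun hρ l
  rw [← rk_top_subtype K] at hfin hle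
  rw [← rk_top_subtype L] at hle
  have hinj : Function.Injective ρ :=
    injective_of_surjective_of_rk_le (fun l => ⟨_, hfix l⟩) hfin hle
  refine hLK.antisymm fun k hk => ?_
  have hρk : (ρ ⟨k, hk⟩ : G) = k := congrArg Subtype.val (hinj (hfix (ρ ⟨k, hk⟩)))
  rw [← hρk]
  exact (ρ ⟨k, hk⟩).2

theorem IsRetractOf.eq_or_rk_add_one_le [IsFreeGroup L] (h : IsRetractOf L K) (hfin : rk K < ℵ₀) :
    L = K ∨ rk L + 1 ≤ rk K :=
  (le_or_gt (rk K) (rk L)).imp (h.eq_of_rk_le hfin) add_one_le_of_lt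

end Retract

/-! ### Dependence -/

section Dependence

variable {G : Type*} [Group G] {H E : Subgroup G} {g : G}

theorem rk_zpowers_le_one (g : G) : rk (zpowers g) ≤ 1 := by
  rw [zpowers_eq_closure, ← mk_singleton g]
  exact rk_closure_le {g}

theorem range_freeGroup_lift_const (g : G) :
    (FreeGroup.lift fun _ : Unit => g).range = zpowers g := by
  rw [FreeGroup.range_lift_eq_closure, Set.range_const, zpowers_eq_closure]

theorem range_phi (H : Subgroup G) (g : G) : (phi H g).range = H ⊔ zpowers g := by
  rw [phi, Monoid.Coprod.range_lift, range_subtype, range_freeGroup_lift_const]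

theorem rk_top_coprod_freeGroup_unit_le (G : Type*) [Group G] :
    rk (⊤ : Subgroup (G ∗ FreeGroup Unit)) ≤ rk (⊤ : Subgroup G) + 1 := by
  have hinr : (Monoid.Coprod.inr : FreeGroup Unit →* G ∗ FreeGroup Unit) =
      FreeGroup.lift fun _ => Monoid.Coprod.inr (FreeGroup.of ()) := by
    ext
    simp
  rw [← Monoid.Coprod.range_inl_sup_range_inr, hinr, range_freeGroup_lift_const,
    MonoidHom.range_eq_map]
  exact (rk_sup_le _ _).trans (add_le_add (rk_map_le _ _) (rk_zpowers_le_one _))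

theorem Depends.mono (hHE : H ≤ E) (h : Depends H g) : Depends E g := by
  refine mt (fun hinj => ?_) h
  have hcomp : (phi E g).comp (Monoid.Coprod.map (inclusion hHE) (MonoidHom.id _)) = phi H g := by
    ext <;> simp [phi]
  rw [← hcomp, MonoidHom.coe_comp]
  exact hinj.comp (coprod_map_id_injective (inclusion_injective hHE))

theorem depends_of_mem (hg : g ∈ H) : Depends H g := fun hinj => by
  have hEq : (Monoid.Coprod.inl ⟨g, hg⟩ : H ∗ FreeGroup Unit) =
      Monoid.Coprod.inr (FreeGroup.of ()) := hinj (by simp [phi])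
  exact FreeGroup.of_ne_one () (by simpa using (congrArg Monoid.Coprod.snd hEq).symm)

theorem le_DepSubgroup (H : Subgroup G) : H ≤ DepSubgroup H :=
  fun _ hg => subset_closure (depends_of_mem hg)

variable [IsFreeGroup G]

-- Otherwise `φ_g` maps a group on `rk E + 1` generators onto a free group of at least that rank,
-- so it is injective.
theorem Depends.rk_sup_zpowers_le (h : Depends E g) : rk (E ⊔ zpowers g) ≤ rk E := by
  obtain hinf | hfin := le_or_gt ℵ₀ (rk E)
  · exact (rk_sup_le _ _).trans <| (add_le_add_right (rk_zpowers_le_one g) _).trans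
      (add_one_eq hinf).le
  · by_contra! hlt
    have hcoprod : rk (⊤ : Subgroup (E ∗ FreeGroup Unit)) ≤ rk E + 1 :=
      (rk_top_coprod_freeGroup_unit_le E).trans_eq (by rw [rk_top_subtype])
    have hrange : rk (⊤ : Subgroup (phi E g).range) = rk (E ⊔ zpowers g) := by
      rw [rk_top_subtype, range_phi]
    refine h (MonoidHom.rangeRestrict_injective_iff.1 ?_)
    exact injective_of_surjective_of_rk_le (phi E g).rangeRestrict_surjective
      (hcoprod.trans_lt (add_lt_aleph0 hfin one_lt_aleph0))
      (hcoprod.trans ((add_one_le_of_lt hlt).trans_eq hrange.symm))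

theorem exists_ge_mem_rk_le_of_mem_DepSubgroup (hg : g ∈ DepSubgroup H) (hHE : H ≤ E)
    (hE : E ≤ DepSubgroup H) : ∃ E' ≥ E, E' ≤ DepSubgroup H ∧ g ∈ E' ∧ rk E' ≤ rk E := by
  induction hg using closure_induction generalizing E with
  | mem g hg =>
    exact ⟨E ⊔ zpowers g, le_sup_left, sup_le hE (zpowers_le.2 (subset_closure hg)),
      le_sup_right (a := E) (mem_zpowers g), (Depends.mono hHE hg).rk_sup_zpowers_le⟩
  | one => exact ⟨E, le_rfl, hE, one_mem E, le_rfl⟩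
  | mul x y _ _ ihx ihy =>
    obtain ⟨E₁, hEE₁, hE₁, hx, hrk₁⟩ := ihx hHE hE
    obtain ⟨E₂, hE₁E₂, hE₂, hy, hrk₂⟩ := ihy (hHE.trans hEE₁) hE₁
    exact ⟨E₂, hEE₁.trans hE₁E₂, hE₂, mul_mem (hE₁E₂ hx) hy, hrk₂.trans hrk₁⟩
  | inv x _ ih =>
    obtain ⟨E', hEE', hE', hx, hrk⟩ := ih hHE hE
    exact ⟨E', hEE', hE', inv_mem hx, hrk⟩

theorem exists_ge_subset_rk_le_of_finset_subset_DepSubgroup (T : Finset G)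
    (hT : (T : Set G) ⊆ DepSubgroup H) :
    ∃ E ≥ H, E ≤ DepSubgroup H ∧ (T : Set G) ⊆ E ∧ rk E ≤ rk H := by
  classical
  induction T using Finset.induction_on with
  | empty => exact ⟨H, le_rfl, le_DepSubgroup H, by simp, le_rfl⟩
  | insert g T _ ih =>
    rw [Finset.coe_insert, Set.insert_subset_iff] at hT
    obtain ⟨E, hHE, hE, hTE, hrk⟩ := ih hT.2
    obtain ⟨E', hEE', hE', hg, hrk'⟩ := exists_ge_mem_rk_le_of_mem_DepSubgroup hT.1 hHE hE
    refine ⟨E', hHE.trans hEE', hE', ?_, hrk'.trans hrk⟩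
    rw [Finset.coe_insert, Set.insert_subset_iff]
    exact ⟨hg, hTE.trans hEE'⟩

theorem rk_DepSubgroup_le (hfin : rk H < ℵ₀) : rk (DepSubgroup H) ≤ rk H := by
  classical
  let b := IsFreeGroup.basis (DepSubgroup H)
  obtain ⟨m, hm⟩ := lt_aleph0.1 hfin
  rw [← rk_top_subtype, rk_top_eq_mk b, ← mk_univ, hm, mk_le_iff_forall_finset_subset_card_le]
  intro T _
  obtain ⟨E, _, hE, hTE, hrk⟩ := exists_ge_subset_rk_le_of_finset_subset_DepSubgroup (H := H)
    (T.image fun i => (b i : G)) (by simp [Set.subset_def])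
  obtain ⟨S, hS, hSrk⟩ := exists_closure_eq_mk_eq_rk (E.subgroupOf (DepSubgroup H))
  have hbT : b '' (T : Set _) ⊆ closure S := by
    rintro _ ⟨i, hi, rfl⟩
    rw [hS]
    exact hTE (Finset.mem_image_of_mem _ hi)
  have hcard := lift_mk_le_lift_mk_of_image_subset_closure b hbT
  rw [lift_id, lift_id, hSrk, ← rk_map_of_injective (subtype_injective _),
    map_subgroupOf_eq_of_le hE] at hcard
  simpa [hm] using hcard.trans hrk

end Dependence

/-! ### Echelon form -/

theorem stageSubgroup_mono (n : ℕ) : Monotone (stageSubgroup n) := fun _ _ hij =>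
  closure_mono (Set.image_mono fun _ hk => lt_of_lt_of_le hk hij)

theorem stageSubgroup_zero (n : ℕ) : stageSubgroup n 0 = ⊥ := by
  simp [stageSubgroup]

theorem stageSubgroup_self (n : ℕ) : stageSubgroup n n = ⊤ := by
  simp [stageSubgroup, FreeGroup.closure_range_of]

theorem isRetractOf_inf_stageSubgroup {n : ℕ} (K : Subgroup (FreeGroup (Fin n))) (i : ℕ) :
    IsRetractOf (K ⊓ stageSubgroup n i) K :=
  isRetractOf_inf_closure_of_image {j : Fin n | (j : ℕ) < i} K

theorem inf_stageSubgroup_succ_eq_or_rk_add_one_le {n : ℕ} {K : Subgroup (FreeGroup (Fin n))}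
    (hK : rk K < ℵ₀) (i : ℕ) :
    K ⊓ stageSubgroup n i = K ⊓ stageSubgroup n (i + 1) ∨
      rk (K ⊓ stageSubgroup n i) + 1 ≤ rk (K ⊓ stageSubgroup n (i + 1)) := by
  have h := isRetractOf_inf_stageSubgroup (K ⊓ stageSubgroup n (i + 1)) i
  rw [inf_assoc, inf_eq_right.2 (stageSubgroup_mono n i.le_succ)] at h
  exact h.eq_or_rk_add_one_le ((isRetractOf_inf_stageSubgroup K _).rk_le.trans_lt hK)

theorem inf_eq_inf_of_le {α : Type*} [SemilatticeInf α] {a b x y : α} (hab : a ≤ b)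
    (h : b ⊓ x = b ⊓ y) : a ⊓ x = a ⊓ y := by
  rw [← inf_eq_left.2 hab, inf_assoc, h, inf_assoc]

namespace IsEchelon

variable {n : ℕ} {H K : Subgroup (FreeGroup (Fin n))}

theorem rk_inf_stageSubgroup_succ_le (hH : IsEchelon H) {i : ℕ} (hi : i < n) :
    rk (H ⊓ stageSubgroup n (i + 1)) ≤ rk (H ⊓ stageSubgroup n i) + 1 :=
  hH (i + 1) i.succ_pos hi

theorem rk_inf_stageSubgroup_le (hH : IsEchelon H) {i : ℕ} (hi : i ≤ n) :
    rk (H ⊓ stageSubgroup n i) ≤ i := by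
  induction i with
  | zero =>
    rw [stageSubgroup_zero, inf_bot_eq, ← Subgroup.closure_empty]
    simpa using rk_closure_le (∅ : Set (FreeGroup (Fin n)))
  | succ i ih =>
    rw [Nat.cast_succ]
    exact (hH.rk_inf_stageSubgroup_succ_le hi).trans (add_le_add_left (ih (i.le_succ.trans hi)) 1)

theorem rk_lt_aleph0 (hH : IsEchelon H) : rk H < ℵ₀ := by
  have := hH.rk_inf_stageSubgroup_le le_rfl
  rw [stageSubgroup_self, inf_top_eq] at this
  exact this.trans_lt natCast_lt_aleph0

theorem rk_inf_stageSubgroup_le_of_le (hH : IsEchelon H) (hHK : H ≤ K) (hK : rk K < ℵ₀) {i : ℕ}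
    (hi : i ≤ n) : rk (H ⊓ stageSubgroup n i) ≤ rk (K ⊓ stageSubgroup n i) := by
  induction i with
  | zero => rw [stageSubgroup_zero, inf_bot_eq, inf_bot_eq]
  | succ i ih =>
    replace ih := ih (i.le_succ.trans hi)
    obtain hstage | hjump := inf_stageSubgroup_succ_eq_or_rk_add_one_le hK i
    · rwa [← hstage, ← inf_eq_inf_of_le hHK hstage]
    · exact (hH.rk_inf_stageSubgroup_succ_le hi).trans ((add_le_add_left ih 1).trans hjump)

theorem rk_inf_stageSubgroup_le_of_rk_le (hH : IsEchelon H) (hHK : H ≤ K) (hrk : rk K ≤ rk H)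
    {i : ℕ} (hi : i ≤ n) : rk (K ⊓ stageSubgroup n i) ≤ rk (H ⊓ stageSubgroup n i) := by
  induction hi using Nat.decreasingInduction with
  | self => rwa [stageSubgroup_self, inf_top_eq, inf_top_eq]
  | of_succ i hi ih =>
    obtain hstage | hjump :=
      inf_stageSubgroup_succ_eq_or_rk_add_one_le (hrk.trans_lt hH.rk_lt_aleph0) i
    · rwa [hstage, inf_eq_inf_of_le hHK hstage]
    · exact add_one_le_add_one_iff.1 (hjump.trans (ih.trans (hH.rk_inf_stageSubgroup_succ_le hi)))

theorem of_le_of_rk_le (hH : IsEchelon H) (hHK : H ≤ K) (hrk : rk K ≤ rk H) : IsEchelon K := by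
  have hstage {i : ℕ} (hi : i ≤ n) : rk (K ⊓ stageSubgroup n i) = rk (H ⊓ stageSubgroup n i) :=
    (hH.rk_inf_stageSubgroup_le_of_rk_le hHK hrk hi).antisymm
      (hH.rk_inf_stageSubgroup_le_of_le hHK (hrk.trans_lt hH.rk_lt_aleph0) hi)
  intro i hi₁ hin
  rw [hstage hin, hstage ((i.sub_le 1).trans hin)]
  exact hH i hi₁ hin

end IsEchelon

/-- if `H` is in echelon form then so is `Dep H`. -/
theorem isEchelon_DepSubgroup {n : ℕ} (H : Subgroup (FreeGroup (Fin n)))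
    (hH : IsEchelon H) : IsEchelon (DepSubgroup H) := by
  have hrk : rk (DepSubgroup H) ≤ rk H := rk_DepSubgroup_le hH.rk_lt_aleph0
  exact hH.of_le_of_rk_le (le_DepSubgroup H) hrk
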